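/- arXiv:1802.08796 — 2 statements merged into one kernel-verified Lean document; each statement's English description precedes it below -/
import Mathlib

section
/- Let P = { q_{i_1 i_2 i_3 i_4 i_5} q_{j_1 j_2 j_3 j_4 j_5} : i_k + j_k = 1 and i_k, j_k ∈ {0,1} for all 1 ≤ k ≤ 5 } be the set of quadratic monomials whose two subscript vectors are complementary. Then for all u, v ∈ P the binomial u − v belongs to I_5 = ker φ_5, and for all u, v ∈ P with u ≠ v the binomial u − v does not belong to the set G_5. -/
open MvPolynomial

/-- The homomorphism `φ_m` sending `q_{i_1⋯i_m}` to
`a_{i_1}^{(1)} ⋯ a_{i_m}^{(m)} a_{i_1+⋯+i_m mod 2}^{(m+1)}`.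
Here `(0,1)`-vectors are modeled as `Fin m → Bool`, and the variable `a_i^{(j)}` is
indexed by the pair `(j, i) : Fin (m+1) × Bool`. -/
noncomputable def phiCut (K : Type*) [CommRing K] (m : ℕ) :
    MvPolynomial (Fin m → Bool) K →ₐ[K] MvPolynomial (Fin (m + 1) × Bool) K :=
  aeval fun v =>
    (∏ j : Fin m, (X (Fin.castSucc j, v j) : MvPolynomial (Fin (m + 1) × Bool) K)) *
      X (Fin.last m, decide ((∑ j : Fin m, if v j then 1 else 0) % 2 = 1))

/-- The set `G_{m+1}` of quadratic binomials
`q_{i_1⋯i_{m+1}} q_{j_1⋯j_{m+1}} - q_{k_1⋯k_{m+1}} q_{l_1⋯l_{m+1}} ∈ I_{m+1}` such that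
either (1) for some position `a` all four subscripts agree at `a` and the binomial
obtained by deleting the `a`-th index lies in `I_m`, or (2) at every position `b` the
subscripts satisfy `i_b + j_b = 1 = k_b + l_b` and the binomial obtained by deleting the
`b`-th index lies in `I_m`. -/
def Gset (K : Type*) [Field K] (m : ℕ) : Set (MvPolynomial (Fin (m + 1) → Bool) K) :=
  {f | ∃ I J L M : Fin (m + 1) → Bool,
    f = X I * X J - X L * X M ∧
    f ∈ RingHom.ker (phiCut K (m + 1)).toRingHom ∧
    ((∃ a : Fin (m + 1), I a = J a ∧ J a = L a ∧ L a = M a ∧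
        (X (a.removeNth I) * X (a.removeNth J) - X (a.removeNth L) * X (a.removeNth M) :
          MvPolynomial (Fin m → Bool) K) ∈ RingHom.ker (phiCut K m).toRingHom) ∨
      (∀ b : Fin (m + 1), I b ≠ J b ∧ L b ≠ M b ∧
        (X (b.removeNth I) * X (b.removeNth J) - X (b.removeNth L) * X (b.removeNth M) :
          MvPolynomial (Fin m → Bool) K) ∈ RingHom.ker (phiCut K m).toRingHom))}

/-- The number of ones of a `(0,1)`-vector. -/
def weight {m : ℕ} (v : Fin m → Bool) : ℕ := ∑ j, if v j then 1 else 0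

theorem weight_add_weight_not {m : ℕ} (v : Fin m → Bool) :
    weight v + weight (fun k => !v k) = m := by
  unfold weight
  rw [← Finset.sum_add_distrib, Finset.sum_congr rfl (g := fun _ => 1)]
  · simp
  · intro j _
    cases h : v j <;> simp [h]

theorem weight_eq_add_weight_removeNth {m : ℕ} (v : Fin (m + 1) → Bool) (b : Fin (m + 1)) :
    weight v = (if v b then 1 else 0) + weight (b.removeNth v) := by
  unfold weight
  rw [Fin.sum_univ_succAbove _ b]
  rfl

theorem phiCut_X (K : Type*) [CommRing K] (m : ℕ) (v : Fin m → Bool) :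
    phiCut K m (X v) =
      (∏ j : Fin m, X (Fin.castSucc j, v j)) * X (Fin.last m, decide (weight v % 2 = 1)) := by
  simp only [phiCut, aeval_X]
  rfl

/-- In odd dimension the image of a complementary monomial does not depend on the vector. -/
theorem phiCut_X_mul_X_not (K : Type*) [CommRing K] {m : ℕ} (hm : Odd m) (v : Fin m → Bool) :
    phiCut K m (X v * X fun k => !v k) =
      (∏ j : Fin m, X (Fin.castSucc j, true) * X (Fin.castSucc j, false)) *
        (X (Fin.last m, true) * X (Fin.last m, false)) := by
  have hw := weight_add_weight_not v
  rw [map_mul, phiCut_X, phiCut_X, mul_mul_mul_comm, ← Finset.prod_mul_distrib]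
  congr 1
  · refine Finset.prod_congr rfl fun j _ => ?_
    cases v j
    · exact mul_comm _ _
    · rfl
  · obtain ⟨r, hr⟩ := hm
    rcases Nat.mod_two_eq_zero_or_one (weight v) with h | h
    · have h' : weight (fun k => !v k) % 2 = 1 := by omega
      simp [h, h', mul_comm]
    · have h' : weight (fun k => !v k) % 2 = 0 := by omega
      simp [h, h']

/-- If `I`, `J` have weights of the same parity, so does `L` whenever the binomial
`q_I q_J - q_L q_M` lies in the kernel. -/
theorem weight_mod_two_eq_of_mem_ker (K : Type*) [Field K] {m : ℕ} {I J L M : Fin m → Bool}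
    (hIJ : weight I % 2 = weight J % 2)
    (h : (X I * X J - X L * X M : MvPolynomial (Fin m → Bool) K) ∈
      RingHom.ker (phiCut K m).toRingHom) :
    weight I % 2 = weight L % 2 := by
  have h0 : phiCut K m (X I * X J - X L * X M) = 0 := h
  by_contra hne
  have h1 := congrArg (aeval fun x : Fin (m + 1) × Bool =>
    if x.1 = Fin.last m ∧ x.2 ≠ decide (weight I % 2 = 1) then (0 : K) else 1) h0
  have hJ : decide (weight J % 2 = 1) = decide (weight I % 2 = 1) := by rw [hIJ]
  have hL : decide (weight L % 2 = 1) ≠ decide (weight I % 2 = 1) := by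
    intro hd
    rw [decide_eq_decide] at hd
    omega
  simp only [map_sub, map_mul, phiCut_X, map_prod, aeval_X, map_zero, hJ] at h1
  simp [hL, (Fin.castSucc_lt_last _).ne] at h1

/-- In odd dimension, two complementary monomials whose difference stays in the kernel after
deleting any index coincide. -/
theorem X_mul_X_eq_of_removeNth_mem_ker (K : Type*) [Field K] {m : ℕ} (hm : Even m)
    {I J L M : Fin (m + 1) → Bool}
    (h : ∀ b : Fin (m + 1), I b ≠ J b ∧ L b ≠ M b ∧
      (X (b.removeNth I) * X (b.removeNth J) - X (b.removeNth L) * X (b.removeNth M) :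
        MvPolynomial (Fin m → Bool) K) ∈ RingHom.ker (phiCut K m).toRingHom) :
    (X I * X J : MvPolynomial (Fin (m + 1) → Bool) K) = X L * X M := by
  obtain rfl : J = fun k => !I k := by
    funext k
    have := (h k).1
    cases hI : I k <;> cases hJ : J k <;> simp_all
  obtain rfl : M = fun k => !L k := by
    funext k
    have := (h k).2.1
    cases hL : L k <;> cases hM : M k <;> simp_all
  have hpar : ∀ b : Fin (m + 1),
      weight (b.removeNth I) % 2 = weight (b.removeNth L) % 2 := by
    intro b
    refine weight_mod_two_eq_of_mem_ker K ?_ (h b).2.2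
    have hw : weight (b.removeNth I) + weight (b.removeNth fun k => !I k) = m :=
      weight_add_weight_not (b.removeNth I)
    obtain ⟨r, hr⟩ := hm
    omega
  by_cases hIL : weight I % 2 = weight L % 2
  · obtain rfl : I = L := by
      funext b
      have h1 := weight_eq_add_weight_removeNth I b
      have h2 := weight_eq_add_weight_removeNth L b
      have h3 := hpar b
      cases hI : I b <;> cases hL : L b <;> simp [hI, hL] at h1 h2 ⊢ <;> omega
    rfl
  · obtain rfl : L = fun k => !I k := by
      funext b
      have h1 := weight_eq_add_weight_removeNth I b
      have h2 := weight_eq_add_weight_removeNth L b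
      have h3 := hpar b
      cases hI : I b <;> cases hL : L b <;> simp [hI, hL] at h1 h2 ⊢ <;> omega
    simp [mul_comm]

/-- A binomial whose four subscripts agree at some position vanishes as soon as it is a
difference of complementary monomials. -/
theorem binomial_eq_zero_of_common_index (K : Type*) [CommRing K] {ι : Type*}
    {I J L M w z : ι → Bool} {a : ι} (hIJ : I a = J a) (hJL : J a = L a) (hLM : L a = M a)
    (h : (X w * X (fun k => !w k) - X z * X (fun k => !z k) : MvPolynomial (ι → Bool) K) =
      X I * X J - X L * X M) :
    (X I * X J - X L * X M : MvPolynomial (ι → Bool) K) = 0 := by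
  have h1 := congrArg (aeval fun v : ι → Bool =>
    if v a = M a then (X v : MvPolynomial (ι → Bool) K) else 0) h
  have hzero : ∀ v : ι → Bool, ((if v a = M a then (X v : MvPolynomial (ι → Bool) K) else 0) *
      if (!v a) = M a then X (fun k => !v k) else 0) = 0 := by
    intro v
    cases v a <;> cases M a <;> simp
  simp only [map_sub, map_mul, aeval_X, hzero, hIJ, hJL, hLM, if_true, sub_zero] at h1
  exact h1.symm

/-- Let `P` be the set of quadratic monomials `q_{i_1⋯i_5} q_{j_1⋯j_5}` whose two
subscript vectors are complementary. Then for all `u, v ∈ P` the binomial `u - v` lies in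
`I_5 = ker φ_5`, and for all distinct `u, v ∈ P` the binomial `u - v` does not lie in
`G_5`. -/
theorem complementary_binomials_mem_I5_not_mem_G5 (K : Type*) [Field K] :
    (∀ u ∈ {p : MvPolynomial (Fin 5 → Bool) K | ∃ w : Fin 5 → Bool,
        p = X w * X (fun k => ! w k)},
      ∀ v ∈ {p : MvPolynomial (Fin 5 → Bool) K | ∃ w : Fin 5 → Bool,
        p = X w * X (fun k => ! w k)},
      u - v ∈ RingHom.ker (phiCut K 5).toRingHom) ∧
    (∀ u ∈ {p : MvPolynomial (Fin 5 → Bool) K | ∃ w : Fin 5 → Bool,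
        p = X w * X (fun k => ! w k)},
      ∀ v ∈ {p : MvPolynomial (Fin 5 → Bool) K | ∃ w : Fin 5 → Bool,
        p = X w * X (fun k => ! w k)},
      u ≠ v → u - v ∉ Gset K 4) := by
  refine ⟨?_, ?_⟩
  · rintro _ ⟨w, rfl⟩ _ ⟨z, rfl⟩
    change phiCut K 5 _ = 0
    rw [map_sub, phiCut_X_mul_X_not K (by decide), phiCut_X_mul_X_not K (by decide), sub_self]
  · rintro _ ⟨w, rfl⟩ _ ⟨z, rfl⟩ hne ⟨I, J, L, M, hf, -, ⟨a, hIJ, hJL, hLM, -⟩ | h⟩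
    · refine hne (sub_eq_zero.mp (hf.trans ?_))
      exact binomial_eq_zero_of_common_index K hIJ hJL hLM hf
    · refine hne (sub_eq_zero.mp (hf.trans (sub_eq_zero.mpr ?_)))
      exact X_mul_X_eq_of_removeNth_mem_ker K (by decide) h
end

section
/- The ideal I_5 = ker φ_5 is not generated by the set G_5; more precisely, the binomial q = q_{10101} q_{01010} − q_{11111} q_{00000} belongs to I_5 but not to the ideal generated by G_5, so the ideal generated by G_5 is strictly contained in I_5. -/
open MvPolynomial

/-- The parity of the number of `true` entries of `v`, as used in `phiCut`. -/
abbrev parityBit {m : ℕ} (v : Fin m → Bool) : Bool :=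
  decide ((∑ j : Fin m, if v j then 1 else 0) % 2 = 1)

theorem phiCut_binomial_mem_ker_iff {K : Type*} [Field K] {m : ℕ} {I J L M : Fin m → Bool} :
    (X I * X J - X L * X M : MvPolynomial (Fin m → Bool) K) ∈
        RingHom.ker (phiCut K m).toRingHom ↔
      phiCut K m (X I) * phiCut K m (X J) = phiCut K m (X L) * phiCut K m (X M) := by
  simp [RingHom.mem_ker, sub_eq_zero]

theorem eval_phiCut_X {K : Type*} [Field K] {m : ℕ} (c : Fin (m + 1) × Bool → K)
    (v : Fin m → Bool) :
    eval c (phiCut K m (X v)) =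
      (∏ j : Fin m, c (Fin.castSucc j, v j)) * c (Fin.last m, parityBit v) := by
  simp [phiCut, parityBit]

/-- A binomial in the kernel of `phiCut` whose first monomial is constant at a position has the
same constant value at that position in its second monomial. -/
theorem apply_eq_of_mem_ker {K : Type*} [Field K] {m : ℕ} {I J L M : Fin m → Bool}
    (h : (X I * X J - X L * X M : MvPolynomial (Fin m → Bool) K) ∈
      RingHom.ker (phiCut K m).toRingHom) {j : Fin m} {b : Bool} (hI : I j = b) (hJ : J j = b) :
    L j = b ∧ M j = b := by
  have key := congrArg (eval fun p : Fin (m + 1) × Bool =>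
    if p = (Fin.castSucc j, !b) then (0 : K) else 1) (phiCut_binomial_mem_ker_iff.1 h)
  have lhs : ∀ v : Fin m → Bool, eval (fun p : Fin (m + 1) × Bool =>
      if p = (Fin.castSucc j, !b) then (0 : K) else 1) (phiCut K m (X v)) =
        if v j = b then 1 else 0 := by
    intro v
    rw [eval_phiCut_X, if_neg (by simp [Fin.ext_iff, j.isLt.ne']), mul_one]
    split_ifs with hv
    · refine Finset.prod_eq_one fun k _ => if_neg ?_
      rintro hk
      obtain ⟨hk, hb⟩ := Prod.mk.inj hk
      obtain rfl := Fin.castSucc_injective _ hk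
      simp [hv] at hb
    · refine Finset.prod_eq_zero (Finset.mem_univ j) (if_pos ?_)
      simpa [Bool.eq_not] using hv
  rw [map_mul, map_mul, lhs, lhs, lhs, lhs, if_pos hI, if_pos hJ] at key
  constructor <;> by_contra hne <;> simp [hne] at key

theorem parityBit_eq_of_mem_ker {K : Type*} [Field K] {m : ℕ} {I J L M : Fin m → Bool}
    (h : (X I * X J - X L * X M : MvPolynomial (Fin m → Bool) K) ∈
      RingHom.ker (phiCut K m).toRingHom) (hIJ : parityBit J = parityBit I) :
    parityBit L = parityBit I := by
  have key := congrArg (eval fun p : Fin (m + 1) × Bool =>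
    if p = (Fin.last m, !parityBit I) then (0 : K) else 1) (phiCut_binomial_mem_ker_iff.1 h)
  have lhs : ∀ v : Fin m → Bool, eval (fun p : Fin (m + 1) × Bool =>
      if p = (Fin.last m, !parityBit I) then (0 : K) else 1) (phiCut K m (X v)) =
        if parityBit v = parityBit I then 1 else 0 := by
    intro v
    rw [eval_phiCut_X, Finset.prod_eq_one fun k _ =>
      if_neg (by simp [Fin.ext_iff, k.isLt.ne]), one_mul]
    by_cases hv : parityBit v = parityBit I
    · rw [if_pos hv, if_neg (by simp [hv])]
    · rw [if_neg hv, if_pos (by rw [Bool.eq_not.2 hv])]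
  rw [map_mul, map_mul, lhs, lhs, lhs, lhs, if_pos rfl, if_pos hIJ] at key
  by_contra hne
  simp [hne] at key

theorem parityBit_not_of_even_length (v : Fin 4 → Bool) :
    parityBit (fun j => !v j) = parityBit v := by
  revert v; decide

/-- The parities of the five deletions of a vector determine it up to complementation. -/
theorem eq_or_eq_not_of_parityBit_removeNth (I L : Fin 5 → Bool)
    (h : ∀ b : Fin 5, parityBit (b.removeNth L) = parityBit (b.removeNth I)) :
    L = I ∨ L = fun j => !I j := by
  revert I L; decide +kernel

/-- Binomials of the second kind in `Gset K 4` are zero. -/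
theorem binomial_eq_zero_of_complementary {K : Type*} [Field K] {I J L M : Fin 5 → Bool}
    (h : ∀ b : Fin 5, I b ≠ J b ∧ L b ≠ M b ∧
      (X (b.removeNth I) * X (b.removeNth J) - X (b.removeNth L) * X (b.removeNth M) :
        MvPolynomial (Fin 4 → Bool) K) ∈ RingHom.ker (phiCut K 4).toRingHom) :
    (X I * X J - X L * X M : MvPolynomial (Fin 5 → Bool) K) = 0 := by
  obtain rfl : J = fun j => !I j := funext fun b => Bool.eq_not.2 (h b).1.symm
  obtain rfl : M = fun j => !L j := funext fun b => Bool.eq_not.2 (h b).2.1.symm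
  have hpar : ∀ b : Fin 5, parityBit (b.removeNth L) = parityBit (b.removeNth I) := fun b =>
    parityBit_eq_of_mem_ker (h b).2.2 (parityBit_not_of_even_length (b.removeNth I))
  obtain rfl | rfl := eq_or_eq_not_of_parityBit_removeNth I L hpar
  · exact sub_self _
  · simp [mul_comm]

theorem eq_of_mem_ker_of_eq {K : Type*} [Field K] {m : ℕ} {I L M : Fin m → Bool}
    (h : (X I * X I - X L * X M : MvPolynomial (Fin m → Bool) K) ∈
      RingHom.ker (phiCut K m).toRingHom) : L = I ∧ M = I :=
  ⟨funext fun _ => (apply_eq_of_mem_ker h rfl rfl).1,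
    funext fun _ => (apply_eq_of_mem_ker h rfl rfl).2⟩

/-- Evaluation at the indicator of a pair of complementary vectors kills `Gset K 4`. -/
theorem eval_eq_zero_of_mem_Gset {K : Type*} [Field K] (u : Fin 5 → Bool)
    {f : MvPolynomial (Fin 5 → Bool) K} (hf : f ∈ Gset K 4) :
    eval (fun w => if w = u ∨ w = (fun j => !u j) then (1 : K) else 0) f = 0 := by
  obtain ⟨I, J, L, M, rfl, hker, ⟨a, hIJ, hJL, hLM, -⟩ | h⟩ := hf
  · have eq_of_agree : ∀ {v w : Fin 5 → Bool}, (v = u ∨ v = fun j => !u j) →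
        (w = u ∨ w = fun j => !u j) → v a = w a → v = w := by
      rintro v w (rfl | rfl) (rfl | rfl) hvw <;> simp at hvw ⊢
    by_cases h₁ : (I = u ∨ I = fun j => !u j) ∧ (J = u ∨ J = fun j => !u j)
    · obtain rfl := eq_of_agree h₁.1 h₁.2 hIJ
      obtain ⟨rfl, rfl⟩ := eq_of_mem_ker_of_eq hker
      simp
    by_cases h₂ : (L = u ∨ L = fun j => !u j) ∧ (M = u ∨ M = fun j => !u j)
    · obtain rfl := eq_of_agree h₂.1 h₂.2 hLM
      have hker' := neg_mem hker
      rw [neg_sub] at hker'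
      obtain ⟨rfl, rfl⟩ := eq_of_mem_ker_of_eq hker'
      simp
    simp only [map_sub, map_mul, eval_X, ite_zero_mul_ite_zero, if_neg h₁, if_neg h₂, sub_self]
  · rw [binomial_eq_zero_of_complementary h, map_zero]

/-- The ideal `I_5 = ker φ_5` is not generated by `G_5`: the binomial
`q = q_{10101} q_{01010} - q_{11111} q_{00000}` lies in `I_5` but not in the ideal
generated by `G_5`, so the ideal generated by `G_5` is strictly contained in `I_5`. -/
theorem I5_not_generated_by_G5 (K : Type*) [Field K] :
    ((X ![true, false, true, false, true] * X ![false, true, false, true, false] -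
        X ![true, true, true, true, true] * X ![false, false, false, false, false] :
        MvPolynomial (Fin 5 → Bool) K) ∈ RingHom.ker (phiCut K 5).toRingHom) ∧
    ((X ![true, false, true, false, true] * X ![false, true, false, true, false] -
        X ![true, true, true, true, true] * X ![false, false, false, false, false] :
        MvPolynomial (Fin 5 → Bool) K) ∉ Ideal.span (Gset K 4)) ∧
    Ideal.span (Gset K 4) < RingHom.ker (phiCut K 5).toRingHom := by
  have hmem : ((X ![true, false, true, false, true] * X ![false, true, false, true, false] -
      X ![true, true, true, true, true] * X ![false, false, false, false, false] :
      MvPolynomial (Fin 5 → Bool) K) ∈ RingHom.ker (phiCut K 5).toRingHom) := by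
    rw [phiCut_binomial_mem_ker_iff]
    simp [phiCut, Fin.prod_univ_succ, Fin.sum_univ_succ, -Finset.sum_boole]
    ring
  have hnot : ((X ![true, false, true, false, true] * X ![false, true, false, true, false] -
      X ![true, true, true, true, true] * X ![false, false, false, false, false] :
      MvPolynomial (Fin 5 → Bool) K) ∉ Ideal.span (Gset K 4)) := by
    intro h
    have hle : Ideal.span (Gset K 4) ≤ RingHom.ker (eval fun w : Fin 5 → Bool =>
        if w = ![true, false, true, false, true] ∨
          w = (fun j => !(![true, false, true, false, true] : Fin 5 → Bool) j)
        then (1 : K) else 0) :=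
      Ideal.span_le.2 fun f hf => eval_eq_zero_of_mem_Gset _ hf
    have h0 := RingHom.mem_ker.1 (hle h)
    rw [map_sub, map_mul, map_mul, eval_X, eval_X, eval_X, eval_X, if_pos (by decide),
      if_pos (by decide), if_neg (by decide)] at h0
    simp at h0
  refine ⟨hmem, hnot, lt_of_le_of_ne (Ideal.span_le.2 ?_) fun heq => hnot (heq ▸ hmem)⟩
  rintro f ⟨I, J, L, M, -, hker, -⟩
  exact hker
end
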